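/- Let a ∈ ℤ, let n be a positive integer and n-1 < α < n, let λ be a real number with |λ| < 1, and let u : ℕ_{a+1} → ℝ. Define y(k) = ∑_{τ=a+1}^{k} F_{α,α}(λ,τ,a)·u(k-τ+a+1) for k ≥ a+1, and y(k) = 0 for k ≤ a. Then y satisfies the zero initial conditions ∇^κ y(a) = 0 for κ = 0, 1, …, n-1, and the forced nabla fractional difference equation ₐ∇ₖ^α y(k) = λ·y(k) + u(k) for every k ∈ ℕ_{a+1}. -/

import Mathlib

/-!
Everything is read off in generating functions. Shifting the origin to `a + 1`, the weights
`Γ(m+s)/(Γ(s) m!)` occurring in the fractional sum and in the Mittag–Leffler function are the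
coefficients of the formal power series `P s = (1 - X)^(-s)`, and `P (s + t) = P s * P t`
(Chu–Vandermonde).

For `y` vanishing up to `a`, the operator `∇ⁿ` is multiplication by `P (-n)` and the fractional sum
of order `n - α` is multiplication by `P (n - α)`, so the Caputo difference is multiplication by
`P (-α)`. The Mittag–Leffler function `F_{α,α}` has generating function
`F = ∑ⱼ λ^j P ((j+1)α)`, the sum being taken coefficientwise; it converges because the `m`-th
coefficient of `P s` is a polynomial in `s` and `|λ| < 1`. Hence `P (-α) * F = ∑ⱼ λ^j P (jα) = 1 + λ F`
(`P_neg_mul_mlSeries`). Since `y` has generating function `F * U`, with `U` that of `u`,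
applying `P (-α)` yields `U + λ F U`.
-/

/-- The rising function `p^{q̄} = Γ(p+q)/Γ(p)`. -/
noncomputable def rise (p : ℤ) (q : ℝ) : ℝ :=
  Real.Gamma ((p : ℝ) + q) / Real.Gamma (p : ℝ)

/-- The discrete Mittag–Leffler function
`F_{α,β}(λ,k,a) = ∑_{j=0}^∞ λ^j (k-a)^{\overline{jα+β-1}}/Γ(jα+β)`. -/
noncomputable def discML (α β lam : ℝ) (k a : ℤ) : ℝ :=
  ∑' j : ℕ, lam ^ j * rise (k - a) ((j : ℝ) * α + β - 1) / Real.Gamma ((j : ℝ) * α + β)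

/-- The `n`-th backward difference `∇ⁿ f(k) = ∑_{j=0}^n (-1)^j C(n,j) f(k-j)`. -/
noncomputable def bdiff (n : ℕ) (f : ℤ → ℝ) (k : ℤ) : ℝ :=
  ∑ j ∈ Finset.range (n + 1), (-1 : ℝ) ^ j * (n.choose j : ℝ) * f (k - j)

/-- The `γ`-th nabla fractional sum
`ₐ∇ₖ^{-γ} f(k) = ∑_{j=0}^{k-a-1} (Γ(j+γ)/(Γ(γ)Γ(j+1))) f(k-j)`. -/
noncomputable def nsum (a : ℤ) (γ : ℝ) (f : ℤ → ℝ) (k : ℤ) : ℝ :=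
  ∑ j ∈ Finset.range (k - a).toNat,
    (Real.Gamma ((j : ℝ) + γ) / (Real.Gamma γ * Real.Gamma ((j : ℝ) + 1))) * f (k - j)

/-- The nabla Caputo fractional difference
`ₐ∇ₖ^α f(k) = ₐ∇ₖ^{-(n-α)}(∇ⁿ f)(k)` for `n-1 < α < n`. -/
noncomputable def caputo (a : ℤ) (α : ℝ) (n : ℕ) (f : ℤ → ℝ) (k : ℤ) : ℝ :=
  nsum a ((n : ℝ) - α) (bdiff n f) k

open PowerSeries in
/-- The formal power series `(1 - X)^(-s)` for a real exponent `s`. -/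
noncomputable def P (s : ℝ) : PowerSeries ℝ := rescale (-1 : ℝ) (binomialSeries ℝ (-s))

/-- The generating function `∑ₘ f(a+1+m) Xᵐ` of `f` restricted to `ℕ_{a+1}`. -/
noncomputable def gen (a : ℤ) (f : ℤ → ℝ) : PowerSeries ℝ := PowerSeries.mk fun m => f (a + 1 + m)

lemma P_add (s t : ℝ) : P (s + t) = P s * P t := by
  simp only [P]
  rw [neg_add, PowerSeries.binomialSeries_add, map_mul]

lemma P_zero : P 0 = 1 := by simp [P]

lemma coeff_P (s : ℝ) (m : ℕ) :
    PowerSeries.coeff m (P s) = (-1) ^ m * Ring.choose (-s) m := by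
  simp [P, PowerSeries.coeff_rescale]

lemma coeff_P_neg_nat (n m : ℕ) :
    PowerSeries.coeff m (P (-(n : ℝ))) = (-1) ^ m * (n.choose m : ℝ) := by
  rw [coeff_P, neg_neg, Ring.choose_natCast]

lemma coeff_P_eq_ascPochhammer (s : ℝ) (m : ℕ) :
    PowerSeries.coeff m (P s) = (ascPochhammer ℝ m).eval s / (m.factorial : ℝ) := by
  have h := Ring.factorial_nsmul_multichoose_eq_ascPochhammer s m
  rw [Polynomial.ascPochhammer_smeval_eq_eval, nsmul_eq_mul] at h
  have hm : (m.factorial : ℝ) ≠ 0 := by positivity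
  have hs : (-1 : ℝ) ^ m * (-1) ^ m = 1 := by rw [← mul_pow]; simp
  rw [coeff_P, Ring.choose_neg, ← Ring.multichoose_eq, ← h, mul_div_cancel_left₀ _ hm,
    Units.smul_def, zsmul_eq_mul, Int.cast_negOnePow_natCast, ← mul_assoc, hs, one_mul]

lemma Gamma_nat_add (s : ℝ) (hs : 0 < s) (m : ℕ) :
    Real.Gamma ((m : ℝ) + s) = (ascPochhammer ℝ m).eval s * Real.Gamma s := by
  induction m with
  | zero => simp
  | succ m ih =>
    have h : ((m + 1 : ℕ) : ℝ) + s = ((m : ℝ) + s) + 1 := by push_cast; ring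
    rw [h, Real.Gamma_add_one (by positivity), ih, ascPochhammer_succ_eval]
    ring

lemma coeff_P_eq_Gamma (s : ℝ) (hs : 0 < s) (m : ℕ) :
    PowerSeries.coeff m (P s) =
      Real.Gamma ((m : ℝ) + s) / (Real.Gamma s * Real.Gamma ((m : ℝ) + 1)) := by
  have h0 : Real.Gamma s ≠ 0 := (Real.Gamma_pos_of_pos hs).ne'
  rw [coeff_P_eq_ascPochhammer, Gamma_nat_add s hs, Real.Gamma_nat_eq_factorial]
  field_simp

lemma summable_geometric_mul_eval (lam : ℝ) (hlam : |lam| < 1) (q : Polynomial ℝ) :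
    Summable fun j : ℕ => lam ^ j * q.eval (j : ℝ) := by
  simp only [Polynomial.eval_eq_sum_range, Finset.mul_sum]
  refine summable_sum fun i _ => ?_
  have h := (summable_pow_mul_geometric_of_norm_lt_one (R := ℝ) i (r := lam) hlam).mul_left
    (q.coeff i)
  refine h.congr fun j => ?_
  ring

lemma summable_coeff_P (lam : ℝ) (hlam : |lam| < 1) (α : ℝ) (m : ℕ) (b : ℝ) :
    Summable fun j : ℕ => lam ^ j * PowerSeries.coeff m (P ((j : ℝ) * α + b)) := by
  have h := (summable_geometric_mul_eval lam hlam ((ascPochhammer ℝ m).comp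
    (Polynomial.X * Polynomial.C α + Polynomial.C b))).mul_left (m.factorial : ℝ)⁻¹
  refine h.congr fun j => ?_
  rw [coeff_P_eq_ascPochhammer, Polynomial.eval_comp, div_eq_inv_mul, mul_left_comm]
  simp [mul_comm α]

/-- The generating function `∑ⱼ λ^j (1 - X)^(-(j+1)α)` of `F_{α,α}(λ,·,a)`, summed
coefficientwise. -/
noncomputable def mlSeries (α lam : ℝ) : PowerSeries ℝ :=
  PowerSeries.mk fun m => ∑' j : ℕ, lam ^ j * PowerSeries.coeff m (P ((j : ℝ) * α + α))

lemma discML_eq_coeff (α lam : ℝ) (hα : 0 < α) (a : ℤ) (m : ℕ) :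
    discML α α lam (a + 1 + m) a = PowerSeries.coeff m (mlSeries α lam) := by
  rw [mlSeries, PowerSeries.coeff_mk, discML]
  refine tsum_congr fun j => ?_
  rw [coeff_P_eq_Gamma _ (by positivity), rise]
  have h1 : ((a + 1 + m - a : ℤ) : ℝ) = (m : ℝ) + 1 := by push_cast; ring
  have h2 : (m : ℝ) + 1 + ((j : ℝ) * α + α - 1) = (m : ℝ) + ((j : ℝ) * α + α) := by ring
  rw [h1, h2, mul_div_assoc, div_div, mul_comm (Real.Gamma ((m : ℝ) + 1))]

/-- `F_{α,α}` is the impulse response: multiplying by `(1 - X)^α` lowers each exponent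
`(j+1)α` to `jα`, and the term `j = 0` becomes the constant `1`. -/
lemma P_neg_mul_mlSeries (α lam : ℝ) (hlam : |lam| < 1) :
    P (-α) * mlSeries α lam = 1 + PowerSeries.C lam * mlSeries α lam := by
  ext m
  have hs : ∀ l, Summable fun j : ℕ => lam ^ j * PowerSeries.coeff l (P ((j : ℝ) * α + α)) :=
    fun l => summable_coeff_P lam hlam α l α
  have hs0 := summable_coeff_P lam hlam α m 0
  have key : ∀ j : ℕ, ∑ p ∈ Finset.HasAntidiagonal.antidiagonal m, PowerSeries.coeff p.1 (P (-α)) *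
      (lam ^ j * PowerSeries.coeff p.2 (P ((j : ℝ) * α + α))) =
      lam ^ j * PowerSeries.coeff m (P ((j : ℝ) * α + 0)) := by
    intro j
    have hj : (j : ℝ) * α + 0 = -α + ((j : ℝ) * α + α) := by ring
    rw [hj, P_add (-α), PowerSeries.coeff_mul, Finset.mul_sum]
    exact Finset.sum_congr rfl fun p _ => mul_left_comm _ _ _
  have hzero : lam ^ 0 * PowerSeries.coeff m (P (((0 : ℕ) : ℝ) * α + 0)) =
      PowerSeries.coeff m (1 : PowerSeries ℝ) := by
    rw [pow_zero, one_mul, Nat.cast_zero, zero_mul, add_zero, P_zero]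
  have hsucc : ∀ j : ℕ, lam ^ (j + 1) * PowerSeries.coeff m (P (((j + 1 : ℕ) : ℝ) * α + 0)) =
      lam * (lam ^ j * PowerSeries.coeff m (P ((j : ℝ) * α + α))) := by
    intro j
    have hj : ((j + 1 : ℕ) : ℝ) * α + 0 = (j : ℝ) * α + α := by push_cast; ring
    rw [hj, pow_succ', mul_assoc]
  calc PowerSeries.coeff m (P (-α) * mlSeries α lam)
      = ∑ p ∈ Finset.HasAntidiagonal.antidiagonal m, ∑' j : ℕ, PowerSeries.coeff p.1 (P (-α)) *
          (lam ^ j * PowerSeries.coeff p.2 (P ((j : ℝ) * α + α))) := by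
        rw [PowerSeries.coeff_mul]
        refine Finset.sum_congr rfl fun p _ => ?_
        rw [mlSeries, PowerSeries.coeff_mk, tsum_mul_left]
    _ = ∑' j : ℕ, ∑ p ∈ Finset.HasAntidiagonal.antidiagonal m, PowerSeries.coeff p.1 (P (-α)) *
          (lam ^ j * PowerSeries.coeff p.2 (P ((j : ℝ) * α + α))) := by
        refine (Summable.tsum_finsetSum fun p _ => ?_).symm
        exact (hs p.2).mul_left _
    _ = PowerSeries.coeff m (1 : PowerSeries ℝ) +
          ∑' j : ℕ, lam * (lam ^ j * PowerSeries.coeff m (P ((j : ℝ) * α + α))) := by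
        rw [tsum_congr key, hs0.tsum_eq_zero_add, hzero, tsum_congr hsucc]
    _ = PowerSeries.coeff m (1 + PowerSeries.C lam * mlSeries α lam) := by
        rw [map_add, PowerSeries.coeff_C_mul, mlSeries, PowerSeries.coeff_mk, tsum_mul_left]

lemma coeff_mul_gen (a : ℤ) (p : PowerSeries ℝ) (f : ℤ → ℝ) (m : ℕ) :
    PowerSeries.coeff m (p * gen a f) =
      ∑ j ∈ Finset.range (m + 1), PowerSeries.coeff j p * f (a + 1 + m - j) := by
  rw [PowerSeries.coeff_mul, Finset.Nat.sum_antidiagonal_eq_sum_range_succ_mk]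
  refine Finset.sum_congr rfl fun j hj => ?_
  have hj : j ≤ m := by simpa [Nat.lt_succ_iff] using hj
  simp only [gen, PowerSeries.coeff_mk]
  rw [Nat.cast_sub hj, add_sub_assoc]

lemma gen_bdiff (a : ℤ) (n : ℕ) (y : ℤ → ℝ) (hy : ∀ k ≤ a, y k = 0) :
    gen a (bdiff n y) = P (-(n : ℝ)) * gen a y := by
  ext m
  rw [coeff_mul_gen]
  simp only [gen, PowerSeries.coeff_mk, bdiff, coeff_P_neg_nat]
  -- Both sums extend to the range `n + m + 1`: the binomial coefficient vanishes for `j > n`,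
  -- and `y (a + 1 + m - j)` vanishes for `j > m`.
  rw [Finset.sum_subset (Finset.range_mono (show n + 1 ≤ n + m + 1 by omega)),
    Finset.sum_subset (Finset.range_mono (show m + 1 ≤ n + m + 1 by omega))]
  · intro j _ hj
    rw [Finset.mem_range, not_lt] at hj
    rw [hy _ (by omega), mul_zero]
  · intro j _ hj
    rw [Finset.mem_range, not_lt] at hj
    rw [Nat.choose_eq_zero_of_lt (by omega)]
    simp

lemma gen_nsum (a : ℤ) (γ : ℝ) (hγ : 0 < γ) (f : ℤ → ℝ) :
    gen a (nsum a γ f) = P γ * gen a f := by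
  ext m
  rw [coeff_mul_gen]
  simp only [gen, PowerSeries.coeff_mk, nsum, coeff_P_eq_Gamma γ hγ]
  rw [show (a + 1 + m - a).toNat = m + 1 by omega]

/-- forced response with zero initial conditions: for `n-1 < α < n`
and `|λ| < 1`, the function `y` given by the convolution
`y(k) = ∑_{τ=a+1}^{k} F_{α,α}(λ,τ,a) u(k-τ+a+1)` for `k ≥ a+1` (here `τ = a+1+j`)
and `y(k) = 0` for `k ≤ a`, satisfies `∇^κ y(a) = 0` (`κ = 0,…,n-1`) and
`ₐ∇ₖ^α y(k) = λ y(k) + u(k)` for every `k ∈ ℕ_{a+1}`. -/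
theorem forced_response (a : ℤ) (n : ℕ) (hn : 0 < n) (α : ℝ)
    (hα1 : (n : ℝ) - 1 < α) (hα2 : α < n) (lam : ℝ) (hlam : |lam| < 1)
    (u : ℤ → ℝ) (y : ℤ → ℝ)
    (hy1 : ∀ k : ℤ, a + 1 ≤ k →
      y k = ∑ j ∈ Finset.range (k - a).toNat, discML α α lam (a + 1 + j) a * u (k - j))
    (hy2 : ∀ k : ℤ, k ≤ a → y k = 0) :
    (∀ κ : ℕ, κ < n → bdiff κ y a = 0) ∧
    (∀ k : ℤ, a + 1 ≤ k → caputo a α n y k = lam * y k + u k) := by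
  refine ⟨fun κ _ => ?_, fun k hk => ?_⟩
  · exact Finset.sum_eq_zero fun j _ => by rw [hy2 _ (by omega), mul_zero]
  · have hα : 0 < α := by
      have : (1 : ℝ) ≤ n := by exact_mod_cast hn
      linarith
    have hgy : gen a y = mlSeries α lam * gen a u := by
      ext m
      rw [coeff_mul_gen]
      simp only [gen, PowerSeries.coeff_mk]
      rw [hy1 _ (by omega), show (a + 1 + m - a).toNat = m + 1 by omega]
      exact Finset.sum_congr rfl fun j _ => by rw [discML_eq_coeff α lam hα]
    have hgen : gen a (caputo a α n y) = PowerSeries.C lam * gen a y + gen a u := by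
      change gen a (nsum a ((n : ℝ) - α) (bdiff n y)) = _
      rw [gen_nsum a _ (by linarith), gen_bdiff a n y hy2, ← mul_assoc, ← P_add,
        show (n : ℝ) - α + -(n : ℝ) = -α by ring, hgy, ← mul_assoc,
        P_neg_mul_mlSeries α lam hlam]
      ring
    obtain ⟨m, rfl⟩ := Int.le.dest hk
    have h := congrArg (PowerSeries.coeff m) hgen
    rw [map_add, PowerSeries.coeff_C_mul] at h
    simpa only [gen, PowerSeries.coeff_mk] using h
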